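/- arXiv:1901.04705 — 2 statements merged into one kernel-verified Lean document; each statement's English description precedes it below -/
import Mathlib

section
/- The Dirichlet series s ↦ Σ_{n=2}^∞ (log n!)^{−s}, which converges absolutely for Re(s) > 1, has an analytic continuation to {s ∈ ℂ : Re(s) > 0} \ (0, 1]; that is, there exists a function F analytic on {s ∈ ℂ : Re(s) > 0} \ (0, 1] with F(s) = Σ_{n=2}^∞ (log n!)^{−s} whenever Re(s) > 1. -/
open Filter Complex
open MeasureTheory Set Topology

/-!
Since `log ⌊x⌋! = x log x - x + O(1 + log x)`, the difference between the step function
`(log ⌊x⌋!) ^ (-s)` and `(x log x - x) ^ (-s)` is integrable over `(N, ∞)` already for `0 < re s`,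
so the tail `∑_{n ≥ N} (log n!) ^ (-s) = ∫_N^∞ (log ⌊x⌋!) ^ (-s) dx` has the same singularities in
that half-plane as `∫_N^∞ (x log x - x) ^ (-s) dx`. Substituting `x = exp (1 + v)` turns the latter
into the generalized exponential integral `exp (1 - s) ∫_b^∞ exp (-(s - 1) v) v ^ (-s) dv` with
`b = log N - 1`. Writing `Γ(s) v ^ (-s) = ∫_0^∞ t ^ (s - 1) exp (-v t) dt` and integrating over `v`
first expresses it through `∫_0^∞ t ^ (s - 1) exp (-b t) / (s - 1 + t) dt`, which is holomorphic as
long as `1 - s` is not in `[0, ∞)`.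
-/

section ParametricIntegral

variable {α E : Type*} [MeasurableSpace α] {μ : Measure α} [NormedAddCommGroup E]

theorem aestronglyMeasurable_deriv_of_eventually {𝕜 : Type*} [NontriviallyNormedField 𝕜]
    [NormedSpace 𝕜 E] {G : 𝕜 → α → E} {s₀ : 𝕜}
    (hmeas : ∀ᶠ s in 𝓝 s₀, AEStronglyMeasurable (G s) μ)
    (hdiff : ∀ᵐ a ∂μ, DifferentiableAt 𝕜 (G · a) s₀) :
    AEStronglyMeasurable (fun a ↦ deriv (G · a) s₀) μ := by
  obtain ⟨u, hu⟩ := exists_seq_tendsto (𝓝[≠] s₀)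
  obtain ⟨N, hN⟩ := eventually_atTop.1 (hu.eventually (hmeas.filter_mono nhdsWithin_le_nhds))
  refine aestronglyMeasurable_of_tendsto_ae atTop
    (f := fun n a ↦ slope (G · a) s₀ (u (n + N))) (fun n ↦ ?_) ?_
  · simp only [slope, vsub_eq_sub]
    exact ((hN _ (Nat.le_add_left N n)).sub hmeas.self_of_nhds).const_smul _
  · filter_upwards [hdiff] with a ha
    exact ha.hasDerivAt.tendsto_slope.comp (hu.comp (tendsto_add_atTop_nat N))

/-- Cauchy's estimate turns a bound on the integrand into a bound on its derivative. -/
theorem differentiableAt_integral_of_dominated [NormedSpace ℂ E] {G : ℂ → α → E} {s₀ : ℂ}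
    {U : Set ℂ} {bound : α → ℝ} (hU : U ∈ 𝓝 s₀)
    (hmeas : ∀ᶠ s in 𝓝 s₀, AEStronglyMeasurable (G s) μ)
    (hdiff : ∀ᵐ a ∂μ, DifferentiableOn ℂ (G · a) U)
    (hbound : ∀ᵐ a ∂μ, ∀ s ∈ U, ‖G s a‖ ≤ bound a) (hint : Integrable bound μ) :
    DifferentiableAt ℂ (fun s ↦ ∫ a, G s a ∂μ) s₀ := by
  obtain ⟨r, hr, hball⟩ := Metric.mem_nhds_iff.1 hU
  have hsub : ∀ s ∈ Metric.ball s₀ (r / 2), Metric.closedBall s (r / 2) ⊆ U := by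
    intro s hs
    refine (Metric.closedBall_subset_ball' ?_).trans hball
    linarith [Metric.mem_ball.1 hs]
  have hderiv : ∀ᵐ a ∂μ, ∀ s ∈ Metric.ball s₀ (r / 2), DifferentiableAt ℂ (G · a) s := by
    filter_upwards [hdiff] with a ha s hs
    exact ha.differentiableAt
      (mem_of_superset (Metric.closedBall_mem_nhds s (half_pos hr)) (hsub s hs))
  refine (hasDerivAt_integral_of_dominated_loc_of_deriv_le
    (F' := fun s a ↦ deriv (G · a) s) (bound := fun a ↦ bound a / (r / 2))
    (Metric.ball_mem_nhds s₀ (half_pos hr)) hmeas ?_ ?_ ?_ (hint.div_const _) ?_).2.differentiableAt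
  · refine hint.mono' hmeas.self_of_nhds ?_
    filter_upwards [hbound] with a ha using ha s₀ (mem_of_mem_nhds hU)
  · refine aestronglyMeasurable_deriv_of_eventually hmeas ?_
    filter_upwards [hderiv] with a ha using ha s₀ (Metric.mem_ball_self (half_pos hr))
  · filter_upwards [hdiff, hbound] with a hdiff_a hbound_a s hs
    refine norm_deriv_le_of_forall_mem_sphere_norm_le (half_pos hr) ?_ fun z hz ↦
      hbound_a z (hsub s hs (Metric.sphere_subset_closedBall hz))
    exact (hdiff_a.mono (Metric.closure_ball_subset_closedBall.trans (hsub s hs))).diffContOnCl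
  · filter_upwards [hderiv] with a ha s hs using (ha s hs).hasDerivAt

end ParametricIntegral

section ComplexPowers

theorem rpow_le_rpow_add_rpow {t a b c : ℝ} (ht : 0 < t) (hab : a ≤ b) (hbc : b ≤ c) :
    t ^ b ≤ t ^ a + t ^ c := by
  rcases le_total t 1 with ht1 | ht1
  · exact (Real.rpow_le_rpow_of_exponent_ge ht ht1 hab).trans
      (le_add_of_nonneg_right (Real.rpow_nonneg ht.le c))
  · exact (Real.rpow_le_rpow_of_exponent_le ht1 hbc).trans
      (le_add_of_nonneg_left (Real.rpow_nonneg ht.le a))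

theorem ofReal_cpow_neg_eq_exp {x : ℝ} (hx : 0 < x) (s : ℂ) :
    (x : ℂ) ^ (-s) = exp (-s * (Real.log x : ℂ)) := by
  rw [cpow_def_of_ne_zero (ofReal_ne_zero.2 hx.ne'), ofReal_log hx.le, mul_comm]

theorem norm_ofReal_cpow_neg_sub_le {s : ℂ} (hs : -1 ≤ s.re) {c p q : ℝ} (hc : 0 < c)
    (hp : c ≤ p) (hq : c ≤ q) :
    ‖(p : ℂ) ^ (-s) - (q : ℂ) ^ (-s)‖ ≤ ‖s‖ * c ^ (-s.re - 1) * |p - q| := by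
  refine (convex_Ici c).norm_image_sub_le_of_norm_hasDerivWithin_le
    (f := fun x : ℝ ↦ (x : ℂ) ^ (-s)) (f' := fun x : ℝ ↦ -s * (x : ℂ) ^ (-s - 1))
    (fun x hx ↦ ?_) (fun x hx ↦ ?_) hq hp
  · have hx_slit : (x : ℂ) ∈ slitPlane := ofReal_mem_slitPlane.2 (hc.trans_le hx)
    simpa using ((hasDerivAt_id (x : ℂ)).cpow_const (c := -s) hx_slit).comp_ofReal.hasDerivWithinAt
  · rw [norm_mul, norm_neg, norm_cpow_eq_rpow_re_of_pos (hc.trans_le hx), sub_re, neg_re, one_re]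
    gcongr ‖s‖ * ?_
    exact Real.rpow_le_rpow_of_nonpos hc hx (by linarith)

theorem differentiableAt_integral_cpow_neg_sub {α : Type*} [MeasurableSpace α] {μ : Measure α}
    {f g ℓ : α → ℝ} (hf : AEMeasurable f μ) (hg : AEMeasurable g μ)
    (hℓ : ∀ᵐ a ∂μ, 0 < ℓ a) (hℓf : ∀ᵐ a ∂μ, ℓ a ≤ f a) (hℓg : ∀ᵐ a ∂μ, ℓ a ≤ g a)
    (hint : ∀ σ : ℝ, 0 < σ → Integrable (fun a ↦ ℓ a ^ (-σ - 1) * |f a - g a|) μ)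
    {s₀ : ℂ} (hs₀ : 0 < s₀.re) :
    DifferentiableAt ℂ (fun s ↦ ∫ a, ((f a : ℂ) ^ (-s) - (g a : ℂ) ^ (-s)) ∂μ) s₀ := by
  have hU : re ⁻¹' Ioo (s₀.re / 2) (2 * s₀.re) ∩ Metric.ball 0 (‖s₀‖ + 1) ∈ 𝓝 s₀ :=
    ((isOpen_Ioo.preimage continuous_re).inter Metric.isOpen_ball).mem_nhds
      ⟨⟨by linarith, by linarith⟩, by simp⟩
  refine differentiableAt_integral_of_dominated hU
    (bound := fun a ↦ (‖s₀‖ + 1) * (ℓ a ^ (-(2 * s₀.re) - 1) * |f a - g a| +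
      ℓ a ^ (-(s₀.re / 2) - 1) * |f a - g a|))
    (Eventually.of_forall fun s ↦ ?_) ?_ ?_
    (((hint _ (by linarith)).add (hint _ (by linarith))).const_mul _)
  · exact AEMeasurable.aestronglyMeasurable (by fun_prop)
  · filter_upwards [hℓ, hℓf, hℓg] with a hpos hfa hga s _
    have hf_ne : (f a : ℂ) ≠ 0 := ofReal_ne_zero.2 (hpos.trans_le hfa).ne'
    have hg_ne : (g a : ℂ) ≠ 0 := ofReal_ne_zero.2 (hpos.trans_le hga).ne'
    exact ((differentiableAt_id.neg.const_cpow (.inl hf_ne)).sub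
      (differentiableAt_id.neg.const_cpow (.inl hg_ne))).differentiableWithinAt
  · filter_upwards [hℓ, hℓf, hℓg] with a hpos hfa hga s hs
    obtain ⟨⟨hlo, hhi⟩, hs_ball⟩ := hs
    have hs_norm : ‖s‖ ≤ ‖s₀‖ + 1 := (mem_ball_zero_iff.1 hs_ball).le
    calc ‖(f a : ℂ) ^ (-s) - (g a : ℂ) ^ (-s)‖
        ≤ ‖s‖ * ℓ a ^ (-s.re - 1) * |f a - g a| :=
          norm_ofReal_cpow_neg_sub_le (by linarith) hpos hfa hga
      _ ≤ (‖s₀‖ + 1) * (ℓ a ^ (-(2 * s₀.re) - 1) + ℓ a ^ (-(s₀.re / 2) - 1)) * |f a - g a| := by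
          gcongr
          exact rpow_le_rpow_add_rpow hpos (by linarith) (by linarith)
      _ = _ := by ring

theorem integrableOn_Ioi_cpow_neg {f : ℝ → ℝ} (hf : Measurable f) {c δ : ℝ} (hc : 0 < c)
    (hδ : 0 < δ) (hf_le : ∀ x > c, δ * x ≤ f x) {s : ℂ} (hs : 1 < s.re) :
    IntegrableOn (fun x ↦ (f x : ℂ) ^ (-s)) (Ioi c) := by
  refine ((integrableOn_Ioi_rpow_of_lt (neg_lt_neg hs) hc).const_mul (δ ^ (-s.re))).mono'
    (Measurable.aestronglyMeasurable (by fun_prop)) ?_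
  filter_upwards [ae_restrict_mem measurableSet_Ioi] with x hx
  have hx_pos : 0 < x := hc.trans hx
  have hδx : 0 < δ * x := mul_pos hδ hx_pos
  rw [norm_cpow_eq_rpow_re_of_pos (hδx.trans_le (hf_le x hx)), neg_re,
    ← Real.mul_rpow hδ.le hx_pos.le]
  exact Real.rpow_le_rpow_of_nonpos hδx (hf_le x hx) (by linarith)

end ComplexPowers

theorem hasSum_integral_Ioi_comp_floor {E : Type*} [NormedAddCommGroup E] [NormedSpace ℝ E]
    [CompleteSpace E] {f : ℕ → E} {N : ℕ}
    (hf : IntegrableOn (fun x : ℝ ↦ f ⌊x⌋₊) (Ioi (N : ℝ))) :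
    HasSum (fun n ↦ f (n + N)) (∫ x in Ioi (N : ℝ), f ⌊x⌋₊) := by
  let knot : ℕ → ℝ := fun n ↦ n + N
  have hmono : Monotone knot := fun m n hmn ↦ by simpa [knot] using hmn
  have hunion : ⋃ n, Ico (knot n) (knot (Order.succ n)) = Ici (N : ℝ) := by
    have hknot : Tendsto knot atTop atTop :=
      tendsto_atTop_add_const_right _ _ tendsto_natCast_atTop_atTop
    simpa [knot] using iUnion_Ico_map_succ_eq_Ici (fun n ↦ hmono bot_le)
      (not_bddAbove_of_tendsto_atTop hknot)
  have hfloor (n : ℕ) : EqOn (fun x ↦ f ⌊x⌋₊) (fun _ ↦ f (n + N))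
      (Ico (knot n) (knot (Order.succ n))) := by
    rintro x ⟨hx_ge, hx_lt⟩
    have hfloor_x : ⌊x⌋₊ = n + N := by
      simp only [knot, Nat.succ_eq_succ, Nat.cast_succ] at hx_ge hx_lt
      rw [Nat.floor_eq_iff (le_trans (by positivity) hx_ge), Nat.cast_add]
      exact ⟨hx_ge, by linarith⟩
    exact congrArg f hfloor_x
  have hterm (n : ℕ) : ∫ x in Ico (knot n) (knot (Order.succ n)), f ⌊x⌋₊ = f (n + N) := by
    rw [setIntegral_congr_fun measurableSet_Ico (hfloor n)]
    simp [knot]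
  rw [← integrableOn_Ici_iff_integrableOn_Ioi, ← hunion] at hf
  rw [← integral_Ici_eq_integral_Ioi, ← hunion]
  simpa only [hterm] using hasSum_integral_iUnion (fun _ ↦ measurableSet_Ico)
    hmono.pairwise_disjoint_on_Ico_succ hf

section ExponentialIntegral

/-- The Stieltjes transform, evaluated at `-w`, of the Gamma density `t ^ (s - 1) * exp (-b * t)` on
`(0, ∞)`. Up to the factor `exp (-w * b) / Γ(s)` it continues the generalized exponential integral
`∫_b^∞ exp (-w * v) * v ^ (-s) dv` from `0 < re w` to all `w` off `(-∞, 0]`. -/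
noncomputable def gammaStieltjes (b : ℝ) (s w : ℂ) : ℂ :=
  ∫ t in Ioi (0 : ℝ), (t : ℂ) ^ (s - 1) * exp (-b * t) / (w + t)

theorem integrableOn_rpow_mul_exp_neg_mul {σ b : ℝ} (hσ : 0 < σ) (hb : 0 < b) :
    IntegrableOn (fun t : ℝ ↦ t ^ (σ - 1) * Real.exp (-b * t)) (Ioi 0) := by
  simpa only [Real.rpow_one] using
    integrableOn_rpow_mul_exp_neg_mul_rpow (by linarith) one_pos hb

theorem add_ofReal_mem_slitPlane {w : ℂ} (hw : w ∈ slitPlane) {t : ℝ} (ht : 0 ≤ t) :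
    w + t ∈ slitPlane := by
  rw [mem_slitPlane_iff] at hw ⊢
  simp only [add_re, ofReal_re, add_im, ofReal_im, add_zero]
  exact hw.imp_left fun hre ↦ by linarith

theorem exists_pos_eventually_forall_le_norm_add_ofReal {w₀ : ℂ} (hw₀ : w₀ ∈ slitPlane) :
    ∃ ε > 0, ∀ᶠ w : ℂ in 𝓝 w₀, ∀ t : ℝ, 0 ≤ t → ε ≤ ‖w + t‖ := by
  obtain ⟨r, hr, hball⟩ := Metric.isOpen_iff.1 isOpen_slitPlane w₀ hw₀
  refine ⟨r / 2, half_pos hr, ?_⟩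
  filter_upwards [Metric.ball_mem_nhds w₀ (half_pos hr)] with w hw t ht
  by_contra! hlt
  have hneg : -(t : ℂ) ∈ Metric.ball w₀ r := by
    rw [Metric.mem_ball, dist_eq_norm] at hw ⊢
    calc ‖-(t : ℂ) - w₀‖ = ‖(w - w₀) - (w + t)‖ := by congr 1; ring
      _ ≤ ‖w - w₀‖ + ‖w + t‖ := norm_sub_le _ _
      _ < r := by linarith
  simpa using add_ofReal_mem_slitPlane (hball hneg) ht

theorem differentiableAt_gammaStieltjes {b : ℝ} (hb : 0 < b) {w : ℂ → ℂ} {s₀ : ℂ}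
    (hw : ∀ᶠ s in 𝓝 s₀, DifferentiableAt ℂ w s) (hs₀ : 0 < s₀.re) (hw₀ : w s₀ ∈ slitPlane) :
    DifferentiableAt ℂ (fun s ↦ gammaStieltjes b s (w s)) s₀ := by
  obtain ⟨ε, hε, hnorm⟩ := exists_pos_eventually_forall_le_norm_add_ofReal hw₀
  have hre : ∀ᶠ s in 𝓝 s₀, s.re ∈ Ioo (s₀.re / 2) (2 * s₀.re) :=
    continuous_re.continuousAt.eventually_mem (Ioo_mem_nhds (by linarith) (by linarith))
  refine differentiableAt_integral_of_dominated
    (hw.and (hre.and (hw.self_of_nhds.continuousAt.eventually hnorm)))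
    (bound := fun t ↦ (t ^ (s₀.re / 2 - 1) * Real.exp (-b * t) +
      t ^ (2 * s₀.re - 1) * Real.exp (-b * t)) / ε)
    (Eventually.of_forall fun s ↦ ?_) ?_ ?_ ?_
  · exact Measurable.aestronglyMeasurable (by fun_prop)
  · filter_upwards [ae_restrict_mem measurableSet_Ioi] with t ht s hs
    obtain ⟨hw_s, -, hnorm_s⟩ := hs
    have hne : w s + t ≠ 0 := norm_pos_iff.1 (hε.trans_le (hnorm_s t (le_of_lt ht)))
    have ht_ne : (t : ℂ) ≠ 0 := ofReal_ne_zero.2 (ne_of_gt ht)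
    exact ((((differentiableAt_id.sub_const 1).const_cpow (.inl ht_ne)).mul_const _).div
      (hw_s.add_const _) hne).differentiableWithinAt
  · filter_upwards [ae_restrict_mem measurableSet_Ioi] with t ht s hs
    obtain ⟨-, ⟨hlo, hhi⟩, hnorm_s⟩ := hs
    have ht_pos : 0 < t := ht
    have hexp : ‖exp (-b * t)‖ = Real.exp (-b * t) := by simp [norm_exp]
    rw [norm_div, norm_mul, norm_cpow_eq_rpow_re_of_pos ht_pos, hexp, sub_re, one_re, ← add_mul]
    gcongr
    · exact rpow_le_rpow_add_rpow ht_pos (by linarith) (by linarith)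
    · exact hnorm_s t ht_pos.le
  · exact ((integrableOn_rpow_mul_exp_neg_mul (by linarith) hb).add
      (integrableOn_rpow_mul_exp_neg_mul (by linarith) hb)).div_const ε

variable {b : ℝ} {s w : ℂ}

theorem integrable_cpow_mul_exp_neg_add_mul (hb : 0 < b) (hs : 0 < s.re) (hw : 0 < w.re) :
    Integrable (fun p : ℝ × ℝ ↦ (p.2 : ℂ) ^ (s - 1) * exp (-(w + p.2) * p.1))
      ((volume.restrict (Ioi b)).prod (volume.restrict (Ioi 0))) := by
  refine ((integrableOn_exp_mul_Ioi (neg_lt_zero.2 hw) b).mul_prod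
    (integrableOn_rpow_mul_exp_neg_mul hs hb)).mono'
    (Measurable.aestronglyMeasurable (by fun_prop)) ?_
  rw [Measure.prod_restrict]
  filter_upwards [ae_restrict_mem (measurableSet_Ioi.prod measurableSet_Ioi)] with ⟨v, t⟩ ⟨hv, ht⟩
  simp only [mem_Ioi] at hv ht
  have hexp : ‖exp (-(w + t) * v)‖ ≤ Real.exp (-w.re * v) * Real.exp (-b * t) := by
    rw [norm_exp, ← Real.exp_add, Real.exp_le_exp]
    simp only [re_mul_ofReal, neg_re, add_re, ofReal_re]
    nlinarith
  rw [norm_mul, norm_cpow_eq_rpow_re_of_pos ht, sub_re, one_re, mul_left_comm]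
  gcongr

theorem integral_cpow_mul_exp_neg_add_mul {v : ℝ} (hv : 0 < v) (hs : 0 < s.re) :
    ∫ t in Ioi (0 : ℝ), (t : ℂ) ^ (s - 1) * exp (-(w + t) * v) =
      Gamma s * (exp (-w * v) * (v : ℂ) ^ (-s)) := by
  have hsplit (t : ℝ) : (t : ℂ) ^ (s - 1) * exp (-(w + t) * v) =
      exp (-w * v) * ((t : ℂ) ^ (s - 1) * exp (-(v * t))) := by
    rw [mul_left_comm, ← exp_add]
    ring_nf
  have harg : (v : ℂ).arg ≠ Real.pi := by
    simpa [arg_ofReal_of_nonneg hv.le] using Real.pi_ne_zero.symm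
  simp_rw [hsplit]
  rw [integral_const_mul, integral_cpow_mul_exp_neg_mul_Ioi hs (by simpa using hv), one_div,
    inv_cpow _ _ harg, ← cpow_neg]
  ring

/-- Both sides are the double integral of `t ^ (s - 1) * exp (-(w + t) * v)`. -/
theorem Gamma_mul_integral_exp_neg_mul_cpow_neg (hb : 0 < b) (hs : 0 < s.re) (hw : 0 < w.re) :
    Gamma s * ∫ v in Ioi b, exp (-w * v) * (v : ℂ) ^ (-s) =
      exp (-w * b) * gammaStieltjes b s w := by
  have hinner (t : ℝ) (ht : 0 < t) :
      ∫ v in Ioi b, (t : ℂ) ^ (s - 1) * exp (-(w + t) * v) =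
        exp (-w * b) * ((t : ℂ) ^ (s - 1) * exp (-b * t) / (w + t)) := by
    have hre : (-(w + t)).re < 0 := by
      simp only [neg_re, add_re, ofReal_re]
      linarith
    have hexp : exp (-(w + t) * b) = exp (-w * b) * exp (-b * t) := by
      rw [← exp_add]
      ring_nf
    rw [integral_const_mul, integral_exp_mul_complex_Ioi hre, neg_div_neg_eq, hexp]
    ring
  rw [gammaStieltjes, ← integral_const_mul, ← integral_const_mul,
    ← setIntegral_congr_fun measurableSet_Ioi hinner,
    ← integral_integral_swap (integrable_cpow_mul_exp_neg_add_mul hb hs hw)]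
  exact setIntegral_congr_fun measurableSet_Ioi fun v hv ↦
    (integral_cpow_mul_exp_neg_add_mul (hb.trans hv) hs).symm

end ExponentialIntegral

section LogFactorial

/-- The main term `x log x - x` of Stirling's formula for `log x!`. -/
noncomputable def stirlingMain (x : ℝ) : ℝ := x * (Real.log x - 1)

theorem measurable_stirlingMain : Measurable stirlingMain := by
  unfold stirlingMain
  fun_prop

theorem stirlingMain_add_log_mul_sub_le {x y : ℝ} (hx : 0 < x) (hy : 0 < y) :
    stirlingMain x + Real.log x * (y - x) ≤ stirlingMain y := by
  have hlog : y * (Real.log x - Real.log y) ≤ x - y := by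
    rw [← Real.log_div hx.ne' hy.ne']
    calc y * Real.log (x / y) ≤ y * (x / y - 1) := by
          gcongr
          exact Real.log_le_sub_one_of_pos (div_pos hx hy)
      _ = x - y := by field_simp
  unfold stirlingMain
  linarith

theorem log_sub_one_mul_le_stirlingMain {c x : ℝ} (hc : 0 < c) (hcx : c ≤ x) :
    (Real.log c - 1) * x ≤ stirlingMain x := by
  rw [stirlingMain, mul_comm]
  gcongr
  exact (hc.trans_le hcx).le

theorem stirlingMain_le_log_factorial {n : ℕ} (hn : n ≠ 0) :
    stirlingMain n ≤ Real.log n.factorial := by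
  have hlog_n : 0 ≤ Real.log n := Real.log_natCast_nonneg n
  have hlog_pi : 0 ≤ Real.log (2 * Real.pi) := Real.log_nonneg (by linarith [Real.two_le_pi])
  have hstirling := Stirling.le_log_factorial_stirling hn
  unfold stirlingMain
  linarith

theorem log_factorial_le_stirlingMain_add {n : ℕ} (hn : 1 ≤ n) :
    Real.log n.factorial ≤ stirlingMain n + (1 + Real.log n) := by
  induction n, hn using Nat.le_induction with
  | base => simp [stirlingMain]
  | succ n hn ih =>
    have hn_pos : (0 : ℝ) < n := Nat.cast_pos.2 hn
    have htangent := stirlingMain_add_log_mul_sub_le hn_pos (y := n + 1) (by positivity)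
    rw [Nat.factorial_succ, Nat.cast_mul, Real.log_mul (by positivity) (by positivity)]
    push_cast
    linarith

theorem abs_log_factorial_floor_sub_stirlingMain_le {x : ℝ} (hx : 1 ≤ x) :
    |Real.log ⌊x⌋₊.factorial - stirlingMain x| ≤ 1 + Real.log x := by
  have hn : 1 ≤ ⌊x⌋₊ := Nat.one_le_floor_iff x |>.2 hx
  have hn_real : (1 : ℝ) ≤ ⌊x⌋₊ := Nat.one_le_cast.2 hn
  have hx_pos : 0 < x := one_pos.trans_le hx
  have hn_le : (⌊x⌋₊ : ℝ) ≤ x := Nat.floor_le hx_pos.le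
  have hlt : x < ⌊x⌋₊ + 1 := Nat.lt_floor_add_one x
  have hlog_n : 0 ≤ Real.log ⌊x⌋₊ := Real.log_nonneg hn_real
  have hlog_x : 0 ≤ Real.log x := Real.log_nonneg hx
  have hlog_le : Real.log ⌊x⌋₊ ≤ Real.log x := Real.log_le_log (by linarith) hn_le
  have hmono : stirlingMain ⌊x⌋₊ ≤ stirlingMain x := by
    have htangent := stirlingMain_add_log_mul_sub_le (one_pos.trans_le hn_real) hx_pos
    nlinarith
  have hincr : stirlingMain x ≤ stirlingMain ⌊x⌋₊ + Real.log x := by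
    have htangent := stirlingMain_add_log_mul_sub_le hx_pos (one_pos.trans_le hn_real)
    nlinarith
  rw [abs_le]
  constructor
  · linarith [stirlingMain_le_log_factorial (Nat.one_le_iff_ne_zero.1 hn)]
  · linarith [log_factorial_le_stirlingMain_add hn]

theorem integrableOn_rpow_mul_one_add_log {σ c : ℝ} (hσ : 0 < σ) (hc : 1 ≤ c) :
    IntegrableOn (fun x ↦ x ^ (-σ - 1) * (1 + Real.log x)) (Ioi c) := by
  refine ((integrableOn_Ioi_rpow_of_lt (a := -(σ / 2) - 1) (by linarith)
    (one_pos.trans_le hc)).const_mul (1 + 1 / (σ / 2))).mono'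
    (Measurable.aestronglyMeasurable (by fun_prop)) ?_
  filter_upwards [ae_restrict_mem measurableSet_Ioi] with x hx
  have hx_one : 1 ≤ x := hc.trans (le_of_lt hx)
  have hx_pos : 0 < x := one_pos.trans_le hx_one
  have hlog_nonneg : 0 ≤ Real.log x := Real.log_nonneg hx_one
  have hone : 1 ≤ x ^ (σ / 2) := Real.one_le_rpow hx_one (half_pos hσ).le
  have hlog : Real.log x ≤ x ^ (σ / 2) / (σ / 2) :=
    Real.log_le_rpow_div hx_pos.le (half_pos hσ)
  rw [Real.norm_of_nonneg (by positivity)]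
  calc x ^ (-σ - 1) * (1 + Real.log x)
      ≤ x ^ (-σ - 1) * (x ^ (σ / 2) + x ^ (σ / 2) / (σ / 2)) := by gcongr
    _ = (1 + 1 / (σ / 2)) * (x ^ (-σ - 1) * x ^ (σ / 2)) := by ring
    _ = (1 + 1 / (σ / 2)) * x ^ (-(σ / 2) - 1) := by
        rw [← Real.rpow_add hx_pos]
        ring_nf

theorem integral_Ioi_stirlingMain_cpow_neg {c : ℝ} (hc : Real.exp 1 ≤ c) (s : ℂ) :
    ∫ x in Ioi c, (stirlingMain x : ℂ) ^ (-s) =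
      exp (1 - s) * ∫ v in Ioi (Real.log c - 1), exp (-(s - 1) * v) * (v : ℂ) ^ (-s) := by
  have hc_pos : 0 < c := (Real.exp_pos 1).trans_le hc
  have hlog_c : 1 ≤ Real.log c := (Real.le_log_iff_exp_le hc_pos).2 hc
  have hc_eq : c = Real.exp 1 * Real.exp (Real.log c - 1) := by
    rw [← Real.exp_add, add_sub_cancel, Real.exp_log hc_pos]
  have hterm (v : ℝ) (hv : Real.log c - 1 < v) :
      Real.exp v • (stirlingMain (Real.exp 1 * Real.exp v) : ℂ) ^ (-s) =
        exp (-s) * (exp (-(s - 1) * v) * (v : ℂ) ^ (-s)) := by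
    have hmain : stirlingMain (Real.exp 1 * Real.exp v) = Real.exp (1 + v) * v := by
      rw [stirlingMain, ← Real.exp_add, Real.log_exp, add_sub_cancel_left]
    have hexp : exp v * exp (-s * (1 + v)) = exp (-s) * exp (-(s - 1) * v) := by
      rw [← exp_add, ← exp_add]
      ring_nf
    rw [hmain, ofReal_mul, mul_cpow_ofReal_nonneg (Real.exp_pos _).le (by linarith),
      ofReal_cpow_neg_eq_exp (Real.exp_pos _), Real.log_exp, real_smul, ofReal_exp, ← mul_assoc,
      ofReal_add, ofReal_one, hexp, mul_assoc]
  calc ∫ x in Ioi c, (stirlingMain x : ℂ) ^ (-s)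
      = exp 1 * ∫ y in Ioi (Real.exp (Real.log c - 1)),
          (stirlingMain (Real.exp 1 * y) : ℂ) ^ (-s) := by
        conv_lhs => rw [hc_eq]
        rw [← integral_comp_mul_left_Ioi' (fun x ↦ (stirlingMain x : ℂ) ^ (-s)) _
          (Real.exp_pos 1), real_smul, ofReal_exp, ofReal_one]
    _ = exp 1 * ∫ v in Ioi (Real.log c - 1),
          Real.exp v • (stirlingMain (Real.exp 1 * Real.exp v) : ℂ) ^ (-s) := by
        rw [integral_comp_exp_Ioi fun y ↦ (stirlingMain (Real.exp 1 * y) : ℂ) ^ (-s)]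
    _ = exp (1 - s) * ∫ v in Ioi (Real.log c - 1), exp (-(s - 1) * v) * (v : ℂ) ^ (-s) := by
        rw [setIntegral_congr_fun measurableSet_Ioi hterm, integral_const_mul, ← mul_assoc,
          ← exp_add, ← sub_eq_add_neg]

variable {N : ℕ}

theorem one_le_of_one_lt_log (hN : 1 < Real.log N) : 1 ≤ N :=
  Nat.one_le_iff_ne_zero.2 fun h ↦ by norm_num [h] at hN

theorem log_sub_one_div_two_mul_le_log_factorial_floor (hN : 1 < Real.log N) {x : ℝ}
    (hx : N ≤ x) : (Real.log N - 1) / 2 * x ≤ Real.log ⌊x⌋₊.factorial := by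
  have hN_one : 1 ≤ N := one_le_of_one_lt_log hN
  have hN_le : N ≤ ⌊x⌋₊ := Nat.le_floor hx
  have hfloor_one : (1 : ℝ) ≤ ⌊x⌋₊ := Nat.one_le_cast.2 (hN_one.trans hN_le)
  calc (Real.log N - 1) / 2 * x = (Real.log N - 1) * (x / 2) := by ring
    _ ≤ (Real.log N - 1) * ⌊x⌋₊ := by
        gcongr
        linarith [Nat.lt_floor_add_one x]
    _ ≤ stirlingMain ⌊x⌋₊ :=
        log_sub_one_mul_le_stirlingMain (Nat.cast_pos.2 hN_one) (Nat.cast_le.2 hN_le)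
    _ ≤ Real.log ⌊x⌋₊.factorial :=
        stirlingMain_le_log_factorial (Nat.one_le_iff_ne_zero.1 (hN_one.trans hN_le))

theorem log_sub_one_div_two_mul_le_stirlingMain (hN : 1 < Real.log N) {x : ℝ} (hx : N ≤ x) :
    (Real.log N - 1) / 2 * x ≤ stirlingMain x := by
  have hN_pos : (0 : ℝ) < N := Nat.cast_pos.2 (one_le_of_one_lt_log hN)
  refine le_trans ?_ (log_sub_one_mul_le_stirlingMain hN_pos hx)
  have hx_pos : 0 < x := hN_pos.trans_le hx
  gcongr
  linarith

/-- The continuation of `∑_{n ≥ N} (log n!) ^ (-s)`: the integral of the difference between the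
step function `(log ⌊x⌋!) ^ (-s)` and `(x log x - x) ^ (-s)`, plus the closed form of the integral
of the latter. -/
noncomputable def logFactorialTail (N : ℕ) (s : ℂ) : ℂ :=
  (∫ x in Ioi (N : ℝ), ((Real.log ⌊x⌋₊.factorial : ℂ) ^ (-s) - (stirlingMain x : ℂ) ^ (-s))) +
    exp (1 - s) * ((Gamma s)⁻¹ *
      (exp (-(s - 1) * (Real.log N - 1 : ℝ)) * gammaStieltjes (Real.log N - 1) s (s - 1)))

theorem differentiableAt_integral_log_factorial_sub_stirlingMain (hN : 1 < Real.log N) {s₀ : ℂ}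
    (hs₀ : 0 < s₀.re) :
    DifferentiableAt ℂ (fun s ↦ ∫ x in Ioi (N : ℝ),
      ((Real.log ⌊x⌋₊.factorial : ℂ) ^ (-s) - (stirlingMain x : ℂ) ^ (-s))) s₀ := by
  have hδ : 0 < (Real.log N - 1) / 2 := by linarith
  have hN_one : (1 : ℝ) ≤ N := Nat.one_le_cast.2 (one_le_of_one_lt_log hN)
  have hmem := ae_restrict_mem (μ := volume) (measurableSet_Ioi (a := (N : ℝ)))
  refine differentiableAt_integral_cpow_neg_sub (ℓ := fun x ↦ (Real.log N - 1) / 2 * x)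
    (Measurable.aemeasurable (by fun_prop)) measurable_stirlingMain.aemeasurable
    ?_ ?_ ?_ (fun σ hσ ↦ ?_) hs₀
  · filter_upwards [hmem] with x hx
    exact mul_pos hδ (one_pos.trans_le (hN_one.trans (le_of_lt hx)))
  · filter_upwards [hmem] with x hx
    exact log_sub_one_div_two_mul_le_log_factorial_floor hN (le_of_lt hx)
  · filter_upwards [hmem] with x hx
    exact log_sub_one_div_two_mul_le_stirlingMain hN (le_of_lt hx)
  · refine ((integrableOn_rpow_mul_one_add_log hσ hN_one).const_mul
      (((Real.log N - 1) / 2) ^ (-σ - 1))).mono' ?_ ?_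
    · have hmain_meas := measurable_stirlingMain
      exact Measurable.aestronglyMeasurable (by fun_prop)
    · filter_upwards [hmem] with x hx
      have hx_one : 1 ≤ x := hN_one.trans (le_of_lt hx)
      have hx_nonneg : 0 ≤ x := zero_le_one.trans hx_one
      rw [Real.norm_of_nonneg (by positivity), Real.mul_rpow hδ.le hx_nonneg, mul_assoc]
      gcongr
      exact abs_log_factorial_floor_sub_stirlingMain_le hx_one

theorem differentiableAt_logFactorialTail (hN : 1 < Real.log N) {s : ℂ} (hs : 0 < s.re)
    (hs_slit : s - 1 ∈ slitPlane) : DifferentiableAt ℂ (logFactorialTail N) s := by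
  have hstieltjes : DifferentiableAt ℂ (fun s ↦ gammaStieltjes (Real.log N - 1) s (s - 1)) s :=
    differentiableAt_gammaStieltjes (by linarith) (.of_forall fun s ↦ by fun_prop) hs hs_slit
  have hGamma := differentiable_one_div_Gamma s
  refine (differentiableAt_integral_log_factorial_sub_stirlingMain hN hs).add ?_
  fun_prop

theorem hasSum_logFactorialTail (hN : 1 < Real.log N) {s : ℂ} (hs : 1 < s.re) :
    HasSum (fun n ↦ (Real.log (n + N).factorial : ℂ) ^ (-s)) (logFactorialTail N s) := by
  have hδ : 0 < (Real.log N - 1) / 2 := by linarith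
  have hN_pos : (0 : ℝ) < N := Nat.cast_pos.2 (one_le_of_one_lt_log hN)
  have hN_exp : Real.exp 1 ≤ N := ((Real.lt_log_iff_exp_lt hN_pos).1 hN).le
  have hstep : IntegrableOn (fun x ↦ (Real.log ⌊x⌋₊.factorial : ℂ) ^ (-s)) (Ioi (N : ℝ)) :=
    integrableOn_Ioi_cpow_neg (by fun_prop) hN_pos hδ
      (fun x hx ↦ log_sub_one_div_two_mul_le_log_factorial_floor hN hx.le) hs
  have hmain : IntegrableOn (fun x ↦ (stirlingMain x : ℂ) ^ (-s)) (Ioi (N : ℝ)) :=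
    integrableOn_Ioi_cpow_neg measurable_stirlingMain hN_pos hδ
      (fun x hx ↦ log_sub_one_div_two_mul_le_stirlingMain hN hx.le) hs
  have htail : logFactorialTail N s =
      ∫ x in Ioi (N : ℝ), (Real.log ⌊x⌋₊.factorial : ℂ) ^ (-s) := by
    rw [logFactorialTail, integral_sub hstep hmain, integral_Ioi_stirlingMain_cpow_neg hN_exp,
      ← Gamma_mul_integral_exp_neg_mul_cpow_neg (by linarith) (by linarith) (by simpa using hs),
      inv_mul_cancel_left₀ (Gamma_ne_zero_of_re_pos (by linarith)), sub_add_cancel]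
  rw [htail]
  exact hasSum_integral_Ioi_comp_floor (f := fun n ↦ (Real.log n.factorial : ℂ) ^ (-s)) hstep

end LogFactorial

/-- The Dirichlet series `∑_{n=2}^∞ (log n!)^{−s}`, convergent for
`Re(s) > 1`, has an analytic continuation to `{Re(s) > 0} \ (0, 1]`. -/
theorem log_factorial_dirichlet_series_continuation :
    ∃ F : ℂ → ℂ,
      DifferentiableOn ℂ F
        ({s : ℂ | 0 < s.re} \ {s : ℂ | s.im = 0 ∧ 0 < s.re ∧ s.re ≤ 1}) ∧
      ∀ s : ℂ, 1 < s.re →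
        F s = ∑' n : ℕ,
          Complex.exp (-s * (Real.log (Real.log ((n + 2).factorial : ℝ)) : ℂ)) := by
  have hlog_three : 1 < Real.log (3 : ℕ) :=
    (Real.lt_log_iff_exp_lt (by norm_num)).2 (by exact_mod_cast Real.exp_one_lt_three)
  have hlog_pos (n : ℕ) : 0 < Real.log (n + 2).factorial :=
    Real.log_pos (Nat.one_lt_cast.2 (Nat.one_lt_factorial.2 (by lia)))
  refine ⟨fun s ↦ exp (-s * (Real.log (Real.log (0 + 2).factorial) : ℂ)) + logFactorialTail 3 s,
    ?_, fun s hs ↦ ?_⟩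
  · rintro s ⟨hs_pos, hs_cut⟩
    have hs_slit : s - 1 ∈ slitPlane := by
      simp only [mem_ofPred_eq] at hs_pos hs_cut
      simp only [mem_slitPlane_iff, sub_re, one_re, sub_im, one_im]
      grind
    exact (DifferentiableAt.add (by fun_prop)
      (differentiableAt_logFactorialTail hlog_three hs_pos hs_slit)).differentiableWithinAt
  · let term (n : ℕ) : ℂ := exp (-s * (Real.log (Real.log (n + 2).factorial) : ℂ))
    have htail : HasSum (fun n ↦ term (n + 1)) (logFactorialTail 3 s) := by
      simpa only [term, ← ofReal_cpow_neg_eq_exp (hlog_pos _), add_assoc, Nat.reduceAdd] using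
        hasSum_logFactorialTail hlog_three hs
    exact (tsum_eq_zero_add' htail.summable).trans (congrArg _ htail.tsum_eq) |>.symm
end

section
/- Let α, β > 0 and μ ≥ 0 with α − β(μ+1) < −1. Then Σ_{n=2}^∞ (log n!)^α / ((log n!)^β + r²)^{μ+1} divided by ( C · r^{2(α+1)/β − 2(μ+1)} / log r ) tends to 1 as r → ∞, where C := Γ(μ + 1 − (α+1)/β) · Γ((α+1)/β) / (2·Γ(μ+1)). -/
open Filter Real

/-!
Only the growth `a n ~ n log n` of the sequence `a n = log (n + 2)!` matters. With `R = r ^ (2 / β)`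
the series is a power of `R` times `∑ g (a n / R)`, where `g t = t ^ α / (t ^ β + 1) ^ (μ + 1)`.
Since `a n / R → s` along `n = ⌊s K⌋`, `K = R / log R`, this sum is the integral over `s` of a step
function converging pointwise to `g`, multiplied by `K`. Dominated convergence then gives
`∑ g (a n / R) ~ K ∫ g`, and `∫ g` is a Beta integral. The domination rests on a lower bound
`a ⌊s K⌋ / R ≥ c min (s, s ^ (1 + ε))` uniform in large `R`; some loss near `s = 0` is
unavoidable, because `log (s K)` is not uniformly comparable to `log K` there.
-/

open Asymptotics MeasureTheory Set Topology

section RiemannSums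

theorem measurePreserving_natFloor :
    MeasurePreserving (Nat.floor : ℝ → ℕ) (volume.restrict (Ioi 0)) Measure.count := by
  refine ⟨Nat.measurable_floor, Measure.ext_of_singleton fun n => ?_⟩
  have floor_fiber : Nat.floor ⁻¹' {n} ∩ Ici (0 : ℝ) = Ico (n : ℝ) (n + 1) := by
    ext y
    simp only [mem_inter_iff, mem_preimage, mem_singleton_iff, mem_Ici, mem_Ico]
    constructor
    · rintro ⟨hy, hy0⟩
      exact (Nat.floor_eq_iff hy0).1 hy
    · intro hy
      have hy0 : 0 ≤ y := n.cast_nonneg.trans hy.1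
      exact ⟨(Nat.floor_eq_iff hy0).2 hy, hy0⟩
  rw [Measure.restrict_congr_set Ioi_ae_eq_Ici,
    Measure.map_apply Nat.measurable_floor (measurableSet_singleton n),
    Measure.restrict_apply (Nat.measurable_floor (measurableSet_singleton n)), floor_fiber]
  simp

variable {E : Type*} [NormedAddCommGroup E] [NormedSpace ℝ E] [CompleteSpace E]

theorem inv_smul_tsum_eq_integral_floor_mul {f : ℕ → E} {K : ℝ} (hK : 0 < K)
    (hf : IntegrableOn (fun s : ℝ => f ⌊s * K⌋₊) (Ioi 0)) :
    K⁻¹ • ∑' n, f n = ∫ s in Ioi (0 : ℝ), f ⌊s * K⌋₊ := by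
  have hf_floor : IntegrableOn (fun y : ℝ => f ⌊y⌋₊) (Ioi 0) := by
    simpa using (integrableOn_Ioi_comp_mul_right_iff (fun y : ℝ => f ⌊y⌋₊) 0 hK).1 hf
  have hf_meas : AEStronglyMeasurable f Measure.count := .of_discrete
  have hf_count : Integrable f Measure.count :=
    (measurePreserving_natFloor.integrable_comp hf_meas).1 hf_floor
  calc K⁻¹ • ∑' n, f n
      = K⁻¹ • ∫ n, f n ∂Measure.count := by simp [integral_countable hf_count]
    _ = K⁻¹ • ∫ y in Ioi (0 : ℝ), f ⌊y⌋₊ := by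
        rw [← measurePreserving_natFloor.map_eq,
          integral_map Nat.measurable_floor.aemeasurable .of_discrete]
    _ = ∫ s in Ioi (0 : ℝ), f ⌊s * K⌋₊ := by
        rw [integral_comp_mul_right_Ioi (fun y : ℝ => f ⌊y⌋₊) 0 hK, zero_mul]

theorem tendsto_inv_smul_tsum_of_dominated {ι : Type*} {l : Filter ι}
    [l.IsCountablyGenerated] {K : ι → ℝ} {F : ι → ℕ → E} {g : ℝ → E} {bound : ℝ → ℝ}
    (hK : ∀ᶠ i in l, 0 < K i) (bound_integrable : IntegrableOn bound (Ioi 0))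
    (h_bound : ∀ᶠ i in l, ∀ s > 0, ‖F i ⌊s * K i⌋₊‖ ≤ bound s)
    (h_lim : ∀ s > 0, Tendsto (fun i => F i ⌊s * K i⌋₊) l (𝓝 (g s))) :
    Tendsto (fun i => (K i)⁻¹ • ∑' n, F i n) l (𝓝 (∫ s in Ioi (0 : ℝ), g s)) := by
  have h_meas (i : ι) : AEStronglyMeasurable (fun s : ℝ => F i ⌊s * K i⌋₊)
      (volume.restrict (Ioi 0)) :=
    (StronglyMeasurable.of_discrete.comp_measurable
      (Nat.measurable_floor.comp (measurable_id.mul_const (K i)))).aestronglyMeasurable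
  have h_bound_ae : ∀ᶠ i in l, ∀ᵐ s ∂volume.restrict (Ioi (0 : ℝ)),
      ‖F i ⌊s * K i⌋₊‖ ≤ bound s :=
    h_bound.mono fun i hi => ae_restrict_of_forall_mem measurableSet_Ioi hi
  have h_integral := tendsto_integral_filter_of_dominated_convergence bound
    (Eventually.of_forall h_meas) h_bound_ae bound_integrable
    (ae_restrict_of_forall_mem measurableSet_Ioi h_lim)
  refine h_integral.congr' ?_
  filter_upwards [hK, h_bound_ae] with i hKi hi
  exact (inv_smul_tsum_eq_integral_floor_mul hKi (bound_integrable.mono' (h_meas i) hi)).symm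

end RiemannSums

section LogScale

theorem tendsto_div_log_atTop : Tendsto (fun R : ℝ => R / log R) atTop atTop := by
  have h_zero : Tendsto (fun R : ℝ => log R / R) atTop (𝓝[>] 0) := by
    refine tendsto_nhdsWithin_iff.2 ⟨isLittleO_log_id_atTop.tendsto_div_nhds_zero, ?_⟩
    filter_upwards [eventually_gt_atTop 1] with R hR
    exact div_pos (log_pos hR) (zero_lt_one.trans hR)
  simpa [Pi.inv_def] using h_zero.inv_tendsto_nhdsGT_zero

theorem isEquivalent_log_div_log : (fun R : ℝ => log (R / log R)) ~[atTop] log := by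
  have h_loglog : (fun R : ℝ => log (log R)) =o[atTop] log :=
    isLittleO_log_id_atTop.comp_tendsto tendsto_log_atTop
  refine (IsEquivalent.refl.sub_isLittleO h_loglog).congr_left ?_
  filter_upwards [eventually_gt_atTop 1] with R hR
  exact (log_div (by positivity) (log_pos hR).ne').symm

theorem isEquivalent_natCast_add_const_mul_log (k m : ℕ) :
    (fun n : ℕ => ((n : ℝ) + k) * log (n + m)) ~[atTop] fun n : ℕ => (n : ℝ) * log n := by
  have h_add (j : ℕ) : (fun n : ℕ => (n : ℝ) + j) ~[atTop] fun n : ℕ => (n : ℝ) :=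
    IsEquivalent.refl.add_const_of_norm_tendsto_atTop
      (tendsto_norm_atTop_atTop.comp tendsto_natCast_atTop_atTop)
  exact (h_add k).mul ((h_add m).log tendsto_natCast_atTop_atTop)

variable {a : ℕ → ℝ}

theorem tendsto_comp_floor_mul_div_log_div (ha : a ~[atTop] fun n : ℕ => (n : ℝ) * log n)
    {s : ℝ} (hs : 0 < s) :
    Tendsto (fun R : ℝ => a ⌊s * (R / log R)⌋₊ / R) atTop (𝓝 s) := by
  have h_arg : Tendsto (fun R : ℝ => s * (R / log R)) atTop atTop :=
    tendsto_div_log_atTop.const_mul_atTop hs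
  have h_floor : (fun R : ℝ => (⌊s * (R / log R)⌋₊ : ℝ)) ~[atTop] fun R => s * (R / log R) :=
    isEquivalent_nat_floor.comp_tendsto h_arg
  have h_log_arg : (fun R : ℝ => log (s * (R / log R))) ~[atTop] log := by
    refine (isEquivalent_log_div_log.add_isLittleO
      (isLittleO_const_log_atTop (c := log s))).congr_left ?_
    filter_upwards [tendsto_div_log_atTop.eventually_gt_atTop 0] with R hR
    simp [log_mul hs.ne' hR.ne', add_comm]
  have h_comp : (fun R : ℝ => a ⌊s * (R / log R)⌋₊) ~[atTop] fun R => s * (R / log R) * log R :=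
    (ha.comp_tendsto (tendsto_nat_floor_atTop.comp h_arg)).trans
      (h_floor.mul ((h_floor.log h_arg).trans h_log_arg))
  have h_div : (fun R : ℝ => a ⌊s * (R / log R)⌋₊ / R) ~[atTop] fun _ => s := by
    refine (h_comp.div (IsEquivalent.refl (u := id))).congr_right ?_
    filter_upwards [eventually_gt_atTop 1] with R hR
    have h_log : 0 < log R := log_pos hR
    simp only [Pi.div_apply, id_eq]
    field_simp
  exact h_div.tendsto_const

theorem exists_mul_natCast_mul_log_le (ha_pos : ∀ n, 0 < a n)
    (ha : a ~[atTop] fun n : ℕ => (n : ℝ) * log n) :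
    ∃ c > 0, ∀ n : ℕ, c * (((n : ℝ) + 1) * log (n + 2)) ≤ a n := by
  have h_isBigO : (fun n : ℕ => ((n : ℝ) + 1) * log (n + 2)) =O[atTop] a := by
    simpa using ((isEquivalent_natCast_add_const_mul_log 1 2).trans ha.symm).isBigO
  obtain ⟨C, hC, h_le⟩ := bound_of_isBigO_nat_atTop h_isBigO
  refine ⟨C⁻¹, inv_pos.2 hC, fun n => (inv_mul_le_iff₀ hC).2 ?_⟩
  calc ((n : ℝ) + 1) * log (n + 2) ≤ ‖((n : ℝ) + 1) * log (n + 2)‖ := le_norm_self _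
    _ ≤ C * ‖a n‖ := h_le (ha_pos n).ne'
    _ = C * a n := by rw [norm_of_nonneg (ha_pos n).le]

theorem log_le_mul_log_floor_mul_add_two {ε s K : ℝ} (hε : 0 < ε) (hs : 0 < s) (hK : 0 < K) :
    log K ≤ (1 + 2 / ε * s ^ (-ε)) * log (⌊s * K⌋₊ + 2) := by
  have h_half : 1 ≤ 2 * log (⌊s * K⌋₊ + 2 : ℝ) := by
    have : log 2 ≤ log (⌊s * K⌋₊ + 2 : ℝ) := log_le_log two_pos (by simp)
    linarith [log_two_gt_d9]
  have h_inv : log s⁻¹ ≤ s ^ (-ε) / ε := by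
    simpa [rpow_neg hs.le, inv_rpow hs.le] using log_le_rpow_div (inv_pos.2 hs).le hε
  have h_mul : log (s * K) ≤ log (⌊s * K⌋₊ + 2) :=
    log_le_log (by positivity) (by linarith [Nat.lt_floor_add_one (s * K)])
  calc log K = log (s * K) + log s⁻¹ := by
        rw [log_mul hs.ne' hK.ne', log_inv]; ring
    _ ≤ log (⌊s * K⌋₊ + 2) + s ^ (-ε) / ε := add_le_add h_mul h_inv
    _ ≤ log (⌊s * K⌋₊ + 2) + s ^ (-ε) / ε * (2 * log (⌊s * K⌋₊ + 2)) := by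
        gcongr
        exact le_mul_of_one_le_right (by positivity) h_half
    _ = (1 + 2 / ε * s ^ (-ε)) * log (⌊s * K⌋₊ + 2) := by ring

theorem eventually_log_le_two_mul_log_div_log :
    ∀ᶠ R : ℝ in atTop, log R ≤ 2 * log (R / log R) := by
  filter_upwards [isEquivalent_log_div_log.isLittleO.def one_half_pos, eventually_gt_atTop 1]
    with R hR hR1
  have h_abs := (abs_le.1 hR).1
  rw [norm_of_nonneg (log_pos hR1).le, Pi.sub_apply] at h_abs
  linarith

theorem min_rpow_mul_one_add_mul_rpow_neg_le {b ε s : ℝ} (hb : 0 ≤ b) (hs : 0 < s) :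
    min s (s ^ (1 + ε)) * (1 + b * s ^ (-ε)) ≤ (1 + b) * s := by
  have h_rpow : min s (s ^ (1 + ε)) * s ^ (-ε) ≤ s := calc
    _ ≤ s ^ (1 + ε) * s ^ (-ε) := by gcongr; exact min_le_right _ _
    _ = s := by rw [← rpow_add hs, add_neg_cancel_right, rpow_one]
  calc min s (s ^ (1 + ε)) * (1 + b * s ^ (-ε))
      = min s (s ^ (1 + ε)) + b * (min s (s ^ (1 + ε)) * s ^ (-ε)) := by ring
    _ ≤ s + b * s := by gcongr; exact min_le_left _ _
    _ = (1 + b) * s := by ring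

theorem exists_mul_min_rpow_le_comp_floor_div (ha_pos : ∀ n, 0 < a n)
    (ha : a ~[atTop] fun n : ℕ => (n : ℝ) * log n) {ε : ℝ} (hε : 0 < ε) :
    ∃ c > 0, ∀ᶠ R : ℝ in atTop, ∀ s > 0,
      c * min s (s ^ (1 + ε)) ≤ a ⌊s * (R / log R)⌋₊ / R := by
  obtain ⟨c, hc, h_le⟩ := exists_mul_natCast_mul_log_le ha_pos ha
  refine ⟨c / (2 * (1 + 2 / ε)), by positivity, ?_⟩
  filter_upwards [eventually_log_le_two_mul_log_div_log, eventually_gt_atTop 1,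
    tendsto_div_log_atTop.eventually_gt_atTop 0] with R hR hR1 hK s hs
  have hR_eq : R / log R * log R = R := div_mul_cancel₀ R (log_pos hR1).ne'
  set K := R / log R
  set ℓ := log (⌊s * K⌋₊ + 2 : ℝ)
  have hℓ : 0 < ℓ := log_pos (by linarith [(⌊s * K⌋₊.cast_nonneg : (0 : ℝ) ≤ _)])
  have h_log_R : log R ≤ 2 * ((1 + 2 / ε * s ^ (-ε)) * ℓ) :=
    hR.trans (by gcongr; exact log_le_mul_log_floor_mul_add_two hε hs hK)
  rw [le_div_iff₀ (by positivity)]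
  calc c / (2 * (1 + 2 / ε)) * min s (s ^ (1 + ε)) * R
      = c / (2 * (1 + 2 / ε)) * min s (s ^ (1 + ε)) * (K * log R) := by rw [hR_eq]
    _ ≤ c / (2 * (1 + 2 / ε)) * min s (s ^ (1 + ε)) *
          (K * (2 * ((1 + 2 / ε * s ^ (-ε)) * ℓ))) := by gcongr
    _ = c / (1 + 2 / ε) * (min s (s ^ (1 + ε)) * (1 + 2 / ε * s ^ (-ε))) * (K * ℓ) := by
        field_simp
    _ ≤ c / (1 + 2 / ε) * ((1 + 2 / ε) * s) * (K * ℓ) := by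
        have := min_rpow_mul_one_add_mul_rpow_neg_le (b := 2 / ε) (ε := ε) (by positivity) hs
        gcongr
    _ = c * (s * K * ℓ) := by field_simp
    _ ≤ c * ((⌊s * K⌋₊ + 1) * ℓ) := by gcongr; exact (Nat.lt_floor_add_one _).le
    _ ≤ a ⌊s * K⌋₊ := h_le _

end LogScale

section RiemannSumsLogScale

theorem integrableOn_Ioi_min_rpow {p q : ℝ} (hq : q < 1) (hp : 1 < p) :
    IntegrableOn (fun s : ℝ => min (s ^ (-q)) (s ^ (-p))) (Ioi 0) := by
  have h_near : IntegrableOn (fun s : ℝ => s ^ (-q)) (Ioc 0 1) :=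
    (intervalIntegrable_iff_integrableOn_Ioc_of_le zero_le_one).1
      (intervalIntegral.intervalIntegrable_rpow' (by linarith))
  have h_far : IntegrableOn (fun s : ℝ => s ^ (-p)) (Ioi 1) :=
    integrableOn_Ioi_rpow_of_lt (by linarith) one_pos
  rw [← Ioc_union_Ioi_eq_Ioi zero_le_one]
  refine .union (h_near.congr_fun (fun s hs => ?_) measurableSet_Ioc)
    (h_far.congr_fun (fun s hs => ?_) measurableSet_Ioi)
  · exact (min_eq_left (rpow_le_rpow_of_exponent_ge hs.1 hs.2 (by linarith))).symm
  · exact (min_eq_right (rpow_le_rpow_of_exponent_le (le_of_lt hs) (by linarith))).symm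

theorem min_rpow_le_of_mul_min_rpow_le {c p q r s t : ℝ} (hc : 0 < c) (hs : 0 < s) (hq : 0 ≤ q)
    (hr : 1 ≤ r) (hrq : r * q ≤ p) (ht : c * min s (s ^ r) ≤ t) :
    min (t ^ (-q)) (t ^ (-p)) ≤ (c ^ (-q) + c ^ (-p)) * min (s ^ (-(r * q))) (s ^ (-p)) := by
  have hp : 0 ≤ p := (mul_nonneg (zero_le_one.trans hr) hq).trans hrq
  rcases le_total s 1 with hs1 | hs1
  · rw [min_eq_right (rpow_le_self_of_le_one hs.le hs1 hr)] at ht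
    rw [min_eq_left (rpow_le_rpow_of_exponent_ge hs hs1 (neg_le_neg hrq))]
    calc min (t ^ (-q)) (t ^ (-p)) ≤ t ^ (-q) := min_le_left _ _
      _ ≤ (c * s ^ r) ^ (-q) := rpow_le_rpow_of_nonpos (by positivity) ht (by linarith)
      _ = c ^ (-q) * s ^ (-(r * q)) := by
          rw [mul_rpow hc.le (by positivity), ← rpow_mul hs.le, mul_neg]
      _ ≤ (c ^ (-q) + c ^ (-p)) * s ^ (-(r * q)) := by
          gcongr
          exact le_add_of_nonneg_right (by positivity)
  · rw [min_eq_left (self_le_rpow_of_one_le hs1 hr)] at ht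
    rw [min_eq_right (rpow_le_rpow_of_exponent_le hs1 (neg_le_neg hrq))]
    calc min (t ^ (-q)) (t ^ (-p)) ≤ t ^ (-p) := min_le_right _ _
      _ ≤ (c * s) ^ (-p) := rpow_le_rpow_of_nonpos (by positivity) ht (by linarith)
      _ = c ^ (-p) * s ^ (-p) := mul_rpow hc.le hs.le
      _ ≤ (c ^ (-q) + c ^ (-p)) * s ^ (-p) := by
          gcongr
          exact le_add_of_nonneg_left (by positivity)

variable {E : Type*} [NormedAddCommGroup E] [NormedSpace ℝ E] [CompleteSpace E]

theorem tendsto_inv_smul_tsum_comp_div {a : ℕ → ℝ} (ha_pos : ∀ n, 0 < a n)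
    (ha : a ~[atTop] fun n : ℕ => (n : ℝ) * log n) {g : ℝ → E} (hg : ContinuousOn g (Ioi 0))
    {C p q : ℝ} (hq : 0 ≤ q) (hq1 : q < 1) (hp : 1 < p)
    (hg_le : ∀ t > 0, ‖g t‖ ≤ C * min (t ^ (-q)) (t ^ (-p))) :
    Tendsto (fun R : ℝ => (R / log R)⁻¹ • ∑' n, g (a n / R)) atTop
      (𝓝 (∫ s in Ioi (0 : ℝ), g s)) := by
  have hC : 0 ≤ C := by simpa using (norm_nonneg (g 1)).trans (hg_le 1 one_pos)
  -- The loss `ε = 1 - q` in the lower bound keeps the exponent at `0` integrable.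
  have h_exponent : (1 + (1 - q)) * q < 1 := by nlinarith
  obtain ⟨c, hc, h_lower⟩ := exists_mul_min_rpow_le_comp_floor_div ha_pos ha (sub_pos.2 hq1)
  refine tendsto_inv_smul_tsum_of_dominated (tendsto_div_log_atTop.eventually_gt_atTop 0)
    ((integrableOn_Ioi_min_rpow h_exponent hp).const_mul (c ^ (-q) + c ^ (-p)) |>.const_mul C)
    ?_ fun s hs => (hg.continuousAt (Ioi_mem_nhds hs)).tendsto.comp
      (tendsto_comp_floor_mul_div_log_div ha hs)
  filter_upwards [h_lower, eventually_gt_atTop 0] with R hR hR0 s hs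
  have h_pos : 0 < a ⌊s * (R / log R)⌋₊ / R := div_pos (ha_pos _) hR0
  refine (hg_le _ h_pos).trans (mul_le_mul_of_nonneg_left ?_ hC)
  exact min_rpow_le_of_mul_min_rpow_le hc hs hq (by linarith) (h_exponent.trans hp).le (hR s hs)

end RiemannSumsLogScale

section BetaIntegral

variable {a b : ℝ}

theorem integral_Ioo_rpow_mul_one_sub_rpow (ha : 0 < a) (hb : 0 < b) :
    ∫ u in Ioo (0 : ℝ) 1, u ^ (a - 1) * (1 - u) ^ (b - 1) = ProbabilityTheory.beta a b := by
  rw [ProbabilityTheory.beta_eq_betaIntegralReal a b ha hb, Complex.betaIntegral,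
    intervalIntegral.integral_of_le zero_le_one, ← integral_Ioc_eq_integral_Ioo,
    ← Complex.ofReal_re (∫ u in Ioc (0 : ℝ) 1, _), ← integral_complex_ofReal]
  congr 1
  refine setIntegral_congr_fun measurableSet_Ioc fun u hu => ?_
  simp only [Complex.ofReal_mul, Complex.ofReal_cpow hu.1.le,
    Complex.ofReal_cpow (sub_nonneg.2 hu.2), Complex.ofReal_sub, Complex.ofReal_one]

theorem bijOn_div_one_sub : BijOn (fun u : ℝ => u / (1 - u)) (Ioo 0 1) (Ioi 0) := by
  refine InvOn.bijOn (f' := fun x => x / (1 + x)) ⟨fun u hu => ?_, fun x hx => ?_⟩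
    (fun u hu => div_pos hu.1 (sub_pos.2 hu.2)) fun x hx => ?_
  · have : 1 - u ≠ 0 := (sub_pos.2 hu.2).ne'
    field_simp
    ring
  · have : 0 < x := hx
    have : 1 + x ≠ 0 := by positivity
    field_simp
    ring
  · have : 0 < x := hx
    exact ⟨by positivity, (div_lt_one (by positivity)).2 (by linarith)⟩

theorem hasDerivAt_div_one_sub {u : ℝ} (hu : u ≠ 1) :
    HasDerivAt (fun u : ℝ => u / (1 - u)) (1 / (1 - u) ^ 2) u := by
  convert! (hasDerivAt_id u).div ((hasDerivAt_id u).const_sub 1) (sub_ne_zero.2 hu.symm) using 1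
  simp

theorem integral_Ioi_rpow_div_add_one_rpow (ha : 0 < a) (hb : 0 < b) :
    ∫ x in Ioi (0 : ℝ), x ^ (a - 1) / (x + 1) ^ (a + b) = ProbabilityTheory.beta a b := by
  rw [← integral_Ioo_rpow_mul_one_sub_rpow ha hb, ← bijOn_div_one_sub.image_eq,
    integral_image_eq_integral_abs_deriv_smul measurableSet_Ioo
      (fun u hu => (hasDerivAt_div_one_sub hu.2.ne).hasDerivWithinAt) bijOn_div_one_sub.injOn]
  refine setIntegral_congr_fun measurableSet_Ioo fun u hu => ?_
  have hu0 : 0 < u := hu.1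
  have hu1 : 0 < 1 - u := sub_pos.2 hu.2
  have h_add_one : u / (1 - u) + 1 = (1 - u)⁻¹ := by field_simp; ring
  have h_rpow : (1 - u) ^ (a + b) = (1 - u) ^ (b - 1) * ((1 - u) ^ (a - 1) * (1 - u) ^ 2) := by
    rw [← rpow_natCast (1 - u) 2, ← rpow_add hu1, ← rpow_add hu1]
    congr 1
    push_cast
    ring
  have h_ne : (1 - u) ^ (a - 1) ≠ 0 := by positivity
  simp only [smul_eq_mul]
  rw [h_add_one, abs_of_pos (by positivity), div_rpow hu0.le hu1.le, inv_rpow hu1.le,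
    div_inv_eq_mul, h_rpow]
  field_simp

end BetaIntegral

section MathieuKernel

/-- The summand of a Mathieu-type series normalized to `r = 1`, as a function of a real variable
`t > 0`; the summand for general `r` is recovered by rescaling `t`. -/
noncomputable def mathieuKernel (α β μ t : ℝ) : ℝ :=
  t ^ α / (t ^ β + 1) ^ (μ + 1)

variable {α β μ : ℝ}

theorem continuousOn_mathieuKernel : ContinuousOn (mathieuKernel α β μ) (Ioi 0) := by
  intro t ht
  have ht0 : 0 < t := ht
  have h_rpow (γ : ℝ) : ContinuousAt (fun t : ℝ => t ^ γ) t :=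
    continuousAt_rpow_const _ _ (.inl ht0.ne')
  have h_base : t ^ β + 1 ≠ 0 := by positivity
  have h_denom : (t ^ β + 1) ^ (μ + 1) ≠ 0 := by positivity
  exact ((h_rpow α).div (((h_rpow β).add continuousAt_const).rpow_const (.inl h_base))
    h_denom).continuousWithinAt

theorem norm_mathieuKernel_le_rpow {ν t : ℝ} (hν : 0 ≤ ν) (hνμ : ν ≤ μ + 1) (ht : 0 < t) :
    ‖mathieuKernel α β μ t‖ ≤ t ^ (α - β * ν) := by
  have h_denom : (t ^ β) ^ ν ≤ (t ^ β + 1) ^ (μ + 1) := calc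
    (t ^ β) ^ ν ≤ (t ^ β + 1) ^ ν := by gcongr; linarith
    _ ≤ (t ^ β + 1) ^ (μ + 1) :=
      rpow_le_rpow_of_exponent_le (by linarith [rpow_pos_of_pos ht β]) hνμ
  rw [mathieuKernel, norm_of_nonneg (by positivity), rpow_sub ht, rpow_mul ht.le]
  gcongr

theorem integral_mathieuKernel (hα : -1 < α) (hβ : 0 < β) (hconv : α - β * (μ + 1) < -1) :
    ∫ t in Ioi (0 : ℝ), mathieuKernel α β μ t =
      β⁻¹ * (Gamma (μ + 1 - (α + 1) / β) * Gamma ((α + 1) / β) / Gamma (μ + 1)) := by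
  have ha : 0 < (α + 1) / β := div_pos (by linarith) hβ
  have hb : 0 < μ + 1 - (α + 1) / β := by
    rw [sub_pos, div_lt_iff₀ hβ]
    linarith
  have h_beta := integral_Ioi_rpow_div_add_one_rpow ha hb
  rw [ProbabilityTheory.beta, add_sub_cancel] at h_beta
  rw [mul_comm (Gamma (μ + 1 - _)), ← h_beta,
    ← integral_comp_rpow_Ioi_of_pos (g := fun x => x ^ ((α + 1) / β - 1) / (x + 1) ^ (μ + 1)) hβ,
    ← integral_const_mul]
  refine setIntegral_congr_fun measurableSet_Ioi fun t (ht : 0 < t) => ?_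
  have h_rpow : t ^ α = t ^ (β - 1) * (t ^ β) ^ ((α + 1) / β - 1) := by
    rw [← rpow_mul ht.le, ← rpow_add ht]
    congr 1
    field_simp
    ring
  rw [mathieuKernel, h_rpow, smul_eq_mul]
  field_simp

theorem rpow_div_rpow_add_rpow_eq_mul_mathieuKernel {x R : ℝ} (hx : 0 ≤ x) (hR : 0 < R) :
    x ^ α / (x ^ β + R ^ β) ^ (μ + 1) =
      R ^ (α - β * (μ + 1)) * mathieuKernel α β μ (x / R) := by
  have h_denom : x ^ β + R ^ β = R ^ β * ((x / R) ^ β + 1) := by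
    rw [div_rpow hx hR.le]
    field_simp
  rw [mathieuKernel, h_denom, mul_rpow (by positivity) (by positivity), rpow_sub hR,
    rpow_mul hR.le, div_mul_div_comm, ← mul_rpow hR.le (by positivity), mul_div_cancel₀ _ hR.ne']

end MathieuKernel

section LogFactorial

theorem isEquivalent_log_factorial :
    (fun n : ℕ => log (n.factorial : ℝ)) ~[atTop] fun n : ℕ => (n : ℝ) * log n := by
  have h_diff : (fun n : ℕ => log (n.factorial : ℝ) - n * log n) =O[atTop]
      fun n : ℕ => (n : ℝ) * 1 := by
    refine .of_bound 1 ?_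
    filter_upwards [eventually_ge_atTop 1] with n hn
    have h_upper : log (n.factorial : ℝ) ≤ n * log n := by
      rw [← log_pow]
      exact log_le_log (by positivity) (mod_cast n.factorial_le_pow)
    have h_lower := Stirling.le_log_factorial_stirling (Nat.one_le_iff_ne_zero.1 hn)
    have h_log : 0 ≤ log (n : ℝ) := log_natCast_nonneg n
    have h_log_two_pi : 0 ≤ log (2 * π) := log_nonneg (by linarith [pi_gt_three])
    rw [norm_eq_abs, abs_of_nonpos (by linarith), mul_one, norm_natCast]
    linarith
  exact h_diff.trans_isLittleO <| (isBigO_refl _ _).mul_isLittleO <|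
    (isLittleO_const_log_atTop (c := (1 : ℝ))).comp_tendsto tendsto_natCast_atTop_atTop

theorem isEquivalent_log_factorial_add (k : ℕ) :
    (fun n : ℕ => log ((n + k).factorial : ℝ)) ~[atTop] fun n : ℕ => (n : ℝ) * log n := by
  refine (isEquivalent_log_factorial.comp_tendsto (tendsto_add_atTop_nat k)).trans ?_
  simpa [Function.comp_def] using isEquivalent_natCast_add_const_mul_log k k

theorem log_factorial_add_two_pos (n : ℕ) : 0 < log ((n + 2).factorial : ℝ) :=
  log_pos (mod_cast Nat.one_lt_factorial.2 (by omega))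

end LogFactorial

section MathieuSeries

variable {α β μ : ℝ} {a : ℕ → ℝ}

theorem tendsto_inv_mul_tsum_mathieuKernel (hα : -1 < α) (hβ : 0 < β)
    (hconv : α - β * (μ + 1) < -1) (ha_pos : ∀ n, 0 < a n)
    (ha : a ~[atTop] fun n : ℕ => (n : ℝ) * log n) :
    Tendsto (fun R : ℝ => (R / log R)⁻¹ * ∑' n, mathieuKernel α β μ (a n / R)) atTop
      (𝓝 (∫ t in Ioi (0 : ℝ), mathieuKernel α β μ t)) := by
  have hμ : 0 < μ + 1 := pos_of_mul_pos_right (by linarith) hβ.le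
  set q := max 0 (-α)
  have hq1 : q < 1 := max_lt one_pos (by linarith)
  have hν : (α + q) / β ≤ μ + 1 := (div_le_iff₀ hβ).2 (by linarith)
  have h_bound (t : ℝ) (ht : 0 < t) : ‖mathieuKernel α β μ t‖ ≤
      1 * min (t ^ (-q)) (t ^ (-(β * (μ + 1) - α))) := by
    rw [one_mul]
    refine le_min ?_ ?_
    · convert! norm_mathieuKernel_le_rpow (α := α) (β := β)
        (div_nonneg (by linarith [le_max_right 0 (-α)]) hβ.le) hν ht using 2
      rw [mul_div_cancel₀ _ hβ.ne']
      ring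
    · simpa using norm_mathieuKernel_le_rpow (α := α) (β := β) hμ.le le_rfl ht
  exact tendsto_inv_smul_tsum_comp_div ha_pos ha continuousOn_mathieuKernel (le_max_left _ _) hq1
    (by linarith) h_bound

theorem tendsto_mathieuSeries_div (hα : -1 < α) (hβ : 0 < β)
    (hconv : α - β * (μ + 1) < -1) (ha_pos : ∀ n, 0 < a n)
    (ha : a ~[atTop] fun n : ℕ => (n : ℝ) * log n) :
    Tendsto (fun R : ℝ => (∑' n, a n ^ α / (a n ^ β + R ^ β) ^ (μ + 1)) /
        (R ^ (α + 1 - β * (μ + 1)) / log R)) atTop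
      (𝓝 (β⁻¹ * (Gamma (μ + 1 - (α + 1) / β) * Gamma ((α + 1) / β) / Gamma (μ + 1)))) := by
  rw [← integral_mathieuKernel hα hβ hconv]
  refine (tendsto_inv_mul_tsum_mathieuKernel hα hβ hconv ha_pos ha).congr' ?_
  filter_upwards [eventually_gt_atTop 1] with R hR
  have hR0 : 0 < R := zero_lt_one.trans hR
  have h_log : 0 < log R := log_pos hR
  have h_rpow : R ^ (α + 1 - β * (μ + 1)) = R ^ (α - β * (μ + 1)) * R := by
    rw [add_sub_right_comm, rpow_add_one hR0.ne']
  simp only [fun n => rpow_div_rpow_add_rpow_eq_mul_mathieuKernel (α := α) (β := β) (μ := μ)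
    (ha_pos n).le hR0, tsum_mul_left, h_rpow]
  field_simp

theorem mathieu_log_factorial_asymptotics_general (hα : -1 < α) (hβ : 0 < β)
    (hconv : α - β * (μ + 1) < -1) (ha_pos : ∀ n, 0 < a n)
    (ha : a ~[atTop] fun n : ℕ => (n : ℝ) * log n) :
    Tendsto
      (fun r : ℝ =>
        (∑' n, a n ^ α / (a n ^ β + r ^ 2) ^ (μ + 1)) /
          ((Gamma (μ + 1 - (α + 1) / β) * Gamma ((α + 1) / β) / (2 * Gamma (μ + 1))) *
            r ^ (2 * (α + 1) / β - 2 * (μ + 1)) / log r))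
      atTop (𝓝 1) := by
  have hΓ₁ : 0 < Gamma (μ + 1 - (α + 1) / β) := by
    refine Gamma_pos_of_pos (sub_pos.2 ((div_lt_iff₀ hβ).2 ?_))
    linarith
  have hΓ₂ : 0 < Gamma ((α + 1) / β) := Gamma_pos_of_pos (div_pos (by linarith) hβ)
  have hΓ₃ : 0 < Gamma (μ + 1) :=
    Gamma_pos_of_pos (pos_of_mul_pos_right (by linarith) hβ.le)
  have h_lim := ((tendsto_mathieuSeries_div hα hβ hconv ha_pos ha).comp
    (tendsto_rpow_atTop (y := 2 / β) (by positivity))).div_const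
      (β⁻¹ * (Gamma (μ + 1 - (α + 1) / β) * Gamma ((α + 1) / β) / Gamma (μ + 1)))
  rw [div_self (by positivity)] at h_lim
  refine h_lim.congr' ?_
  filter_upwards [eventually_gt_atTop 1] with r hr
  have hr0 : 0 < r := zero_lt_one.trans hr
  have h_log : 0 < log r := log_pos hr
  have h_sq : (r ^ (2 / β)) ^ β = r ^ 2 := by
    rw [← rpow_mul hr0.le, div_mul_cancel₀ _ hβ.ne', rpow_two]
  have h_rpow : (r ^ (2 / β)) ^ (α + 1 - β * (μ + 1)) = r ^ (2 * (α + 1) / β - 2 * (μ + 1)) := by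
    rw [← rpow_mul hr0.le]
    congr 1
    field_simp
  simp only [Function.comp_apply, h_sq, h_rpow, log_rpow hr0]
  field_simp

end MathieuSeries

/-- Corollary 6.1: asymptotics of the Mathieu-type series built from the
sequence `log n!`:
`∑_{n=2}^∞ (log n!)^α / ((log n!)^β + r²)^{μ+1}
  ∼ C r^{2(α+1)/β − 2(μ+1)} / log r` with
`C = Γ(μ+1−(α+1)/β) Γ((α+1)/β) / (2 Γ(μ+1))`. -/
theorem mathieu_log_factorial_asymptotics
    (α β μ : ℝ) (hα : 0 < α) (hβ : 0 < β) (hμ : 0 ≤ μ)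
    (hconv : α - β * (μ + 1) < -1) :
    Filter.Tendsto
      (fun r : ℝ =>
        (∑' n : ℕ,
          (Real.log (((n + 2).factorial : ℝ))) ^ α /
            ((Real.log (((n + 2).factorial : ℝ))) ^ β + r ^ 2) ^ (μ + 1)) /
        ((Real.Gamma (μ + 1 - (α + 1) / β) * Real.Gamma ((α + 1) / β) /
            (2 * Real.Gamma (μ + 1))) *
          r ^ (2 * (α + 1) / β - 2 * (μ + 1)) / Real.log r))
      Filter.atTop (nhds 1) := by
  exact mathieu_log_factorial_asymptotics_general (by linarith) hβ hconv log_factorial_add_two_pos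
    (isEquivalent_log_factorial_add 2)
end
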